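/- arXiv:1909.01564 — 2 statements merged into one kernel-verified Lean document; each statement's English description precedes it below -/
import Mathlib

section
/- Let 𝓒 be a class of finite simple graphs that is closed under isomorphism, hereditary (closed under induced subgraphs), and weakly sparse (there exists t such that no graph in 𝓒 contains K_{t,t} as a subgraph). Then 𝓒 is nowhere dense if and only if there exists a function f : ℕ → ℕ such that for every k, no graph in 𝓒 is isomorphic to a ≤k-subdivision of a complete graph of order greater than f(k). -/
/-!
If the class is nowhere dense with bound `g`, then `f = g` works, since a graph is a subgraph of
itself and `≤k`-subdivisions are `≤2k`-subdivisions.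

For the converse it suffices to show (`exists_induced_subdivision`) that a `K_{t,t}`-free graph `G`
containing as a subgraph a `≤p`-subdivision of a sufficiently large clique contains an *induced*
`≤p`-subdivision of `K_N`. Order the branch vertices and give each vertex of the subdivision an
index set: `{i}` for a branch vertex, `{i, j}` for an internal vertex of the path joining `i` to
`j`. By Ramsey's theorem for 4-subsets (`finite_ramsey`, `exists_indiscernible`), after passing to
many branch vertices, adjacency in `G` of two vertices of the subdivision depends only on their
positions on their paths and on the order type of the at most four indices involved. If two
vertices with incomparable index sets were adjacent, moving their private indices independently
would yield a `K_{t,t}` (`exists_biclique_of_indiscernible`). Hence all edges of `G` outside the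
subdivision join two vertices of one and the same path (ends included), and replacing every path by
a shortest one on its own vertex set (`exists_induced_path`) makes the subdivision induced.
-/

open scoped Classical

/-- Vertex type of a subdivision of a graph `H` on `Fin n` where the edge `(i,j)` (with `i < j`)
is replaced by a path with `ℓ (i,j)` internal vertices: the branch vertices `Fin n` together
with, for each edge, its internal path vertices. -/
def SubdivVert (n : ℕ) (H : SimpleGraph (Fin n)) (ℓ : Fin n × Fin n → ℕ) : Type :=
  Fin n ⊕ (Σ e : {p : Fin n × Fin n // p.1 < p.2 ∧ H.Adj p.1 p.2}, Fin (ℓ e.1))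

/-- The subdivision of `H` in which each edge `(i,j)` with `i < j` is replaced by a path with
`ℓ (i,j)` internal vertices. -/
def subdivision (n : ℕ) (H : SimpleGraph (Fin n)) (ℓ : Fin n × Fin n → ℕ) :
    SimpleGraph (SubdivVert n H ℓ) :=
  SimpleGraph.fromRel (fun x y =>
    match x, y with
    | Sum.inl i, Sum.inl j => H.Adj i j ∧ i < j ∧ ℓ (i, j) = 0
    | Sum.inl i, Sum.inr ⟨e, k⟩ =>
        (e.1.1 = i ∧ (k : ℕ) = 0) ∨ (e.1.2 = i ∧ (k : ℕ) + 1 = ℓ e.1)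
    | Sum.inr ⟨e, k⟩, Sum.inr ⟨e', k'⟩ => e.1 = e'.1 ∧ (k : ℕ) + 1 = (k' : ℕ)
    | Sum.inr _, Sum.inl _ => False)

/-- `G` contains a copy of `H` as a (not necessarily induced) subgraph. -/
def ContainsSub {V W : Type} (G : SimpleGraph V) (H : SimpleGraph W) : Prop :=
  ∃ f : W ↪ V, ∀ u v : W, H.Adj u v → G.Adj (f u) (f v)

/-- `G` contains a copy of `H` as an induced subgraph. -/
def ContainsInduced {V W : Type} (G : SimpleGraph V) (H : SimpleGraph W) : Prop :=
  ∃ f : W ↪ V, ∀ u v : W, H.Adj u v ↔ G.Adj (f u) (f v)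

/-- A class of finite graphs (as a predicate on graphs on `Fin n`) is nowhere dense if there is
`g : ℕ → ℕ` bounding the clique number of every depth-`r` topological minor of a graph of the
class, i.e. of every graph `H` some `≤2r`-subdivision of which is a subgraph of a graph in
the class. -/
def NowhereDense (C : ∀ n : ℕ, SimpleGraph (Fin n) → Prop) : Prop :=
  ∃ g : ℕ → ℕ, ∀ (r m : ℕ) (H : SimpleGraph (Fin m)),
    (∃ (n : ℕ) (G : SimpleGraph (Fin n)) (ℓ : Fin m × Fin m → ℕ),
        C n G ∧ (∀ e, ℓ e ≤ 2 * r) ∧ ContainsSub G (subdivision m H ℓ)) →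
    H.CliqueFree (g r + 1)

/-- `H` is isomorphic to an induced subgraph of `G`. -/
def IsInducedIn {m n : ℕ} (H : SimpleGraph (Fin m)) (G : SimpleGraph (Fin n)) : Prop :=
  ∃ f : Fin m ↪ Fin n, ∀ u v : Fin m, H.Adj u v ↔ G.Adj (f u) (f v)

/-! ### Ramsey's theorem and indiscernible sequences -/

/-- Ramsey's theorem for `d`-uniform hypergraphs with finitely many colours, stated for subsets of an
arbitrary linear order; the bound `M` does not depend on the order. -/
theorem finite_ramsey (κ : Type) [Finite κ] (d : ℕ) : ∀ N : ℕ, ∃ M : ℕ,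
    ∀ (α : Type) [LinearOrder α] (c : Finset α → κ) (S : Finset α), M ≤ S.card →
      ∃ T ⊆ S, T.card = N ∧ ∃ k, ∀ A ⊆ T, A.card = d → c A = k := by
  have := Fintype.ofFinite κ
  have := Classical.decEq κ
  induction d with
  | zero =>
    intro N
    refine ⟨N, fun α _ c S hS => ?_⟩
    obtain ⟨T, hTS, hT⟩ := Finset.exists_subset_card_eq hS
    refine ⟨T, hTS, hT, c ∅, fun A _ hA => ?_⟩
    rw [Finset.card_eq_zero.1 hA]
  | succ d ih =>
    -- End-homogeneous sets: the colour of a `(d+1)`-subset depends only on its least element.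
    have step : ∀ n : ℕ, ∃ M : ℕ,
        ∀ (α : Type) [LinearOrder α] (c : Finset α → κ) (S : Finset α), M ≤ S.card →
          ∃ T ⊆ S, T.card = n ∧ ∃ g : α → κ, ∀ x ∈ T, ∀ A ⊆ T, A.card = d →
            (∀ y ∈ A, x < y) → c (insert x A) = g x := by
      intro n
      induction n with
      | zero => exact ⟨0, fun α _ c S _ => ⟨∅, by simp, rfl, fun _ => c ∅, by simp⟩⟩
      | succ n ihn =>
        obtain ⟨M₁, hM₁⟩ := ihn
        obtain ⟨M₂, hM₂⟩ := ih M₁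
        refine ⟨M₂ + 1, fun α _ c S hS => ?_⟩
        have hne : S.Nonempty := Finset.card_pos.1 (by omega)
        have hx : S.min' hne ∈ S := Finset.min'_mem _ _
        have hlt : ∀ y ∈ S.erase (S.min' hne), S.min' hne < y := fun y hy =>
          lt_of_le_of_ne (Finset.min'_le _ _ (Finset.mem_of_mem_erase hy))
            (Finset.ne_of_mem_erase hy).symm
        generalize S.min' hne = x at hx hlt
        obtain ⟨T₁, hT₁, hc₁, k, hk⟩ := hM₂ α (fun A => c (insert x A)) (S.erase x)
          (by rw [Finset.card_erase_of_mem hx]; omega)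
        obtain ⟨T₂, hT₂, hc₂, g, hg⟩ := hM₁ α c T₁ hc₁.ge
        have hT₂S := hT₂.trans hT₁
        have hxT : x ∉ T₂ := fun h => lt_irrefl _ (hlt x (hT₂S h))
        refine ⟨insert x T₂, ?_, by rw [Finset.card_insert_of_notMem hxT, hc₂],
          Function.update g x k, ?_⟩
        · intro y hy
          rcases Finset.mem_insert.1 hy with rfl | hy
          · exact hx
          · exact Finset.mem_of_mem_erase (hT₂S hy)
        · intro y hy A hA hAd hyA
          have hle : x ≤ y := by
            rcases Finset.mem_insert.1 hy with rfl | hy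
            · exact le_rfl
            · exact (hlt y (hT₂S hy)).le
          have hAT : A ⊆ T₂ := by
            intro z hz
            rcases Finset.mem_insert.1 (hA hz) with rfl | h
            · exact absurd (hyA _ hz) (not_lt.2 hle)
            · exact h
          rcases Finset.mem_insert.1 hy with rfl | hy
          · rw [Function.update_self]
            exact hk A (hAT.trans hT₂) hAd
          · have : y ≠ x := fun h => hxT (h ▸ hy)
            rw [Function.update_of_ne this]
            exact hg y hy A hAT hAd hyA
    intro N
    obtain ⟨M, hM⟩ := step (Fintype.card κ * N)
    refine ⟨M, fun α _ c S hS => ?_⟩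
    obtain ⟨T, hTS, hT, g, hg⟩ := hM α c S hS
    have : Nonempty κ := ⟨c ∅⟩
    obtain ⟨k, -, hk⟩ := Finset.exists_le_card_fiber_of_mul_le_card_of_maps_to
      (s := T) (t := (Finset.univ : Finset κ)) (f := g) (n := N) (by simp)
      Finset.univ_nonempty (by simp [hT])
    obtain ⟨T', hT', hc'⟩ := Finset.exists_subset_card_eq hk
    refine ⟨T', (hT'.trans (Finset.filter_subset _ _)).trans hTS, hc', k, fun A hA hAd => ?_⟩
    have hne : A.Nonempty := Finset.card_pos.1 (by omega)
    have hx : A.min' hne ∈ A := Finset.min'_mem _ _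
    have hlt : ∀ y ∈ A.erase (A.min' hne), A.min' hne < y := fun y hy =>
      lt_of_le_of_ne (Finset.min'_le _ _ (Finset.mem_of_mem_erase hy))
        (Finset.ne_of_mem_erase hy).symm
    generalize A.min' hne = x at hx hlt
    have hxT := Finset.mem_filter.1 (hT' (hA hx))
    have h := hg x hxT.1 (A.erase x)
      (fun z hz => (Finset.mem_filter.1 (hT' (hA (Finset.mem_of_mem_erase hz)))).1)
      (by rw [Finset.card_erase_of_mem hx]; omega) hlt
    rw [Finset.insert_erase hx] at h
    rw [h, hxT.2]

/-- Order-indiscernible sequences: any property `R` of 4-tuples with parameters `a, b ≤ p` becomes,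
on a long increasing sequence `ψ`, invariant under changing the tuple without changing its order
type. The map `π` allows for tuples with repetitions or in non-increasing order. -/
theorem exists_indiscernible (p N : ℕ) : ∃ M : ℕ,
    ∀ (α : Type) [LinearOrder α] (R : (Fin 4 → α) → ℕ → ℕ → Prop) (S : Finset α), M ≤ S.card →
      ∃ ψ : Fin N ↪o α, (∀ i, ψ i ∈ S) ∧
        ∀ u v : Fin 4 → Fin N, StrictMono u → StrictMono v → ∀ π : Fin 4 → Fin 4,
          ∀ a ≤ p, ∀ b ≤ p, R (ψ ∘ u ∘ π) a b → R (ψ ∘ v ∘ π) a b := by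
  obtain ⟨M, hM⟩ := finite_ramsey ((Fin 4 → Fin 4) → Fin (p + 1) → Fin (p + 1) → Prop) 4 N
  refine ⟨M, fun α _ R S hS => ?_⟩
  obtain ⟨T, hTS, hT, k, hk⟩ := hM α (fun A => if h : A.card = 4 then
    fun π a b => R (A.orderEmbOfFin h ∘ π) a b else fun _ _ _ => True) S hS
  have key : ∀ u : Fin 4 → Fin N, StrictMono u → ∀ (π : Fin 4 → Fin 4) (a b : Fin (p + 1)),
      R (T.orderEmbOfFin hT ∘ u ∘ π) a b = k π a b := by
    intro u hu π a b
    have hmono : StrictMono (T.orderEmbOfFin hT ∘ u) :=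
      (T.orderEmbOfFin hT).strictMono.comp hu
    have hcard : (Finset.univ.image (T.orderEmbOfFin hT ∘ u)).card = 4 := by
      rw [Finset.card_image_of_injective _ hmono.injective]; simp
    have h := hk (Finset.univ.image (T.orderEmbOfFin hT ∘ u)) (by
      intro y hy
      obtain ⟨r, -, rfl⟩ := Finset.mem_image.1 hy
      exact Finset.orderEmbOfFin_mem _ _ _) hcard
    have h2 := Finset.orderEmbOfFin_unique hcard (f := T.orderEmbOfFin hT ∘ u)
      (fun r => Finset.mem_image_of_mem _ (Finset.mem_univ r)) hmono
    rw [dif_pos hcard, ← h2] at h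
    rw [← h]
    rfl
  refine ⟨T.orderEmbOfFin hT, fun i => hTS (Finset.orderEmbOfFin_mem _ _ _), ?_⟩
  intro u v hu hv π a ha b hb h
  have h1 := key u hu π ⟨a, by omega⟩ ⟨b, by omega⟩
  have h2 := key v hv π ⟨a, by omega⟩ ⟨b, by omega⟩
  exact (h1.trans h2.symm).mp h

/-- Objects `w : W` are coded by two indices and a position. Suppose that adjacency `E` of coded
objects is order-indiscernible along `ψ`, and that `w`, `w'` are adjacent with index sets `{i, j}`,
`{k, l}` neither of which contains the other. Keeping the common indices fixed while moving the
indices private to `w` and those private to `w'` independently, within disjoint blocks of length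
`t`, preserves the order type and produces a complete bipartite pattern with parts of size `t`. -/
theorem exists_biclique_of_indiscernible {p N t : ℕ} (h4 : 4 ≤ N) (hN : 4 * t ≤ N)
    {α W : Type} [LinearOrder α] (ψ : Fin N ↪o α) (code : W → α × α × ℕ)
    (hcode : Function.Injective code) (E : W → W → Prop)
    (hψ : ∀ u v : Fin 4 → Fin N, StrictMono u → StrictMono v → ∀ π : Fin 4 → Fin 4,
      ∀ a ≤ p, ∀ b ≤ p,
        (∃ w w', code w = (ψ (u (π 0)), ψ (u (π 1)), a) ∧
          code w' = (ψ (u (π 2)), ψ (u (π 3)), b) ∧ E w w') →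
        ∃ w w', code w = (ψ (v (π 0)), ψ (v (π 1)), a) ∧
          code w' = (ψ (v (π 2)), ψ (v (π 3)), b) ∧ E w w')
    {w w' : W} {i j k l : Fin N} {a b : ℕ} (ha : a ≤ p) (hb : b ≤ p)
    (hw : code w = (ψ i, ψ j, a)) (hw' : code w' = (ψ k, ψ l, b)) (hE : E w w')
    (hIJ : (i ≠ k ∧ i ≠ l) ∨ (j ≠ k ∧ j ≠ l)) (hJI : (k ≠ i ∧ k ≠ j) ∨ (l ≠ i ∧ l ≠ j)) :
    ∃ P Q : Fin t → W, Function.Injective P ∧ Function.Injective Q ∧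
      ∀ s s', E (P s) (Q s') := by
  obtain ⟨T, hT, -, hTc⟩ := Finset.exists_subsuperset_card_eq
    (Finset.subset_univ ({i, j, k, l} : Finset (Fin N))) (Finset.card_le_four) (by simpa using h4)
  have hmem : ∀ x ∈ T, ∃ r, T.orderEmbOfFin hTc r = x := fun x hx => by
    have : x ∈ Set.range (T.orderEmbOfFin hTc) := by
      rw [Finset.range_orderEmbOfFin]; exact hx
    exact this
  have hu : StrictMono (T.orderEmbOfFin hTc) := (T.orderEmbOfFin hTc).strictMono
  generalize T.orderEmbOfFin hTc = u at hmem hu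
  obtain ⟨r0, h0⟩ := hmem i (hT (by simp))
  obtain ⟨r1, h1⟩ := hmem j (hT (by simp))
  obtain ⟨r2, h2⟩ := hmem k (hT (by simp))
  obtain ⟨r3, h3⟩ := hmem l (hT (by simp))
  have hIJ' : (r0 ≠ r2 ∧ r0 ≠ r3) ∨ (r1 ≠ r2 ∧ r1 ≠ r3) := by
    subst h0 h1 h2 h3; simpa using hIJ
  have hJI' : (r2 ≠ r0 ∧ r2 ≠ r1) ∨ (r3 ≠ r0 ∧ r3 ≠ r1) := by
    subst h0 h1 h2 h3; simpa using hJI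
  -- The index of rank `r` among the four is placed in the block `[r * t, (r + 1) * t)`: common
  -- indices at offset `0`, those private to `w` at offset `s`, those private to `w'` at offset `s'`.
  let off : Fin t → Fin t → Fin 4 → ℕ := fun s s' r =>
    if r = r0 ∨ r = r1 then (if r = r2 ∨ r = r3 then 0 else s) else s'
  have hoff : ∀ s s' r, off s s' r < t := by
    intro s s' r
    have := s.2
    have := s'.2
    simp only [off]; split_ifs <;> omega
  have hbd : ∀ (s s' : Fin t) (r : Fin 4), (r : ℕ) * t + off s s' r < N := by
    intro s s' r
    have h1 := hoff s s' r
    have h2 : (r : ℕ) * t ≤ 3 * t := Nat.mul_le_mul_right _ (by omega)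
    omega
  let v : Fin t → Fin t → Fin 4 → Fin N := fun s s' r => ⟨(r : ℕ) * t + off s s' r, hbd s s' r⟩
  have hv : ∀ s s', StrictMono (v s s') := by
    intro s s' r r' hr
    have h1 := hoff s s' r
    have h2 : ((r : ℕ) + 1) * t ≤ (r' : ℕ) * t := Nat.mul_le_mul_right _ hr
    rw [add_mul] at h2
    change (r : ℕ) * t + off s s' r < (r' : ℕ) * t + off s s' r'
    omega
  have hex : ∀ s s', ∃ w w', code w = (ψ (v s s' r0), ψ (v s s' r1), a) ∧
      code w' = (ψ (v s s' r2), ψ (v s s' r3), b) ∧ E w w' := fun s s' =>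
    hψ u (v s s') hu (hv s s') ![r0, r1, r2, r3] a ha b hb
      ⟨w, w', by simp [h0, h1, hw], by simp [h2, h3, hw'], hE⟩
  choose P Q hP hQ hPQ using hex
  have hPs : ∀ s s', P s s' = P s s := fun s s' => hcode (by
    rw [hP, hP]; simp [v, off])
  have hQs : ∀ s s', Q s s' = Q s' s' := fun s s' => hcode (by
    rw [hQ, hQ]; simp [v, off])
  refine ⟨fun s => P s s, fun s => Q s s, ?_, ?_, ?_⟩
  · intro s s' h
    have h' := congrArg code h
    simp only [hP] at h'
    simp only [Prod.mk.injEq, EmbeddingLike.apply_eq_iff_eq, v, Fin.mk.injEq, off] at h'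
    apply Fin.ext
    rcases hIJ' with ⟨h5, h6⟩ | ⟨h5, h6⟩
    · simpa [h5, h6] using h'.1
    · simpa [h5, h6] using h'.2.1
  · intro s s' h
    have h' := congrArg code h
    simp only [hQ] at h'
    simp only [Prod.mk.injEq, EmbeddingLike.apply_eq_iff_eq, v, Fin.mk.injEq, off] at h'
    apply Fin.ext
    rcases hJI' with ⟨h5, h6⟩ | ⟨h5, h6⟩
    · simpa [h5, h6] using h'.1
    · simpa [h5, h6] using h'.2.1
  · intro s s'
    have := hPQ s s'
    rwa [hPs, hQs] at this

/-! ### Induced paths -/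

/-- Among the vertices of a path `q 0, …, q (L + 1)` of `G` there is an induced path with the same
ends, namely a shortest one in the graph that `G` induces on the indices `0, …, L + 1`. -/
theorem exists_induced_path {V : Type} (G : SimpleGraph V) (L : ℕ) (q : ℕ → V)
    (hq : ∀ k ≤ L, G.Adj (q k) (q (k + 1))) :
    ∃ L' ≤ L, ∃ s : ℕ → ℕ, s 0 = 0 ∧ s (L' + 1) = L + 1 ∧
      (∀ a ≤ L' + 1, s a ≤ L + 1) ∧
      (∀ a ≤ L' + 1, ∀ b ≤ L' + 1, s a = s b → a = b) ∧
      ∀ a ≤ L' + 1, ∀ b ≤ L' + 1, (G.Adj (q (s a)) (q (s b)) ↔ a + 1 = b ∨ b + 1 = a) := by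
  let H : SimpleGraph (Fin (L + 2)) := G.comap (fun i => q i)
  have hreach : ∀ k (hk : k < L + 2), H.Reachable 0 ⟨k, hk⟩ := by
    intro k
    induction k with
    | zero => intro hk; exact SimpleGraph.Reachable.refl _
    | succ k ih =>
      intro hk
      refine (ih (by omega)).trans (SimpleGraph.Adj.reachable ?_)
      exact hq k (by omega)
  obtain ⟨w, hw⟩ := (hreach (L + 1) (by omega)).exists_walk_length_eq_dist
  have hpath : w.IsPath := SimpleGraph.Walk.isPath_of_length_eq_dist w hw
  have hlen : w.length < L + 2 := by simpa using hpath.length_lt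
  have hpos : w.length ≠ 0 := fun h => by
    have := SimpleGraph.Walk.eq_of_length_eq_zero h
    simp [Fin.ext_iff] at this
  have hdist : ∀ a ≤ w.length, H.dist 0 (w.getVert a) = a := by
    intro a ha
    have h1 : H.dist 0 (w.getVert a) ≤ a :=
      (SimpleGraph.dist_le (w.take a)).trans (by simp)
    have h2 : H.dist (w.getVert a) ⟨L + 1, by omega⟩ ≤ w.length - a :=
      (SimpleGraph.dist_le (w.drop a)).trans (by simp)
    have h3 := SimpleGraph.Reachable.dist_triangle_left (w.take a).reachable
      (⟨L + 1, by omega⟩ : Fin (L + 2))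
    omega
  have hstep : ∀ a ≤ w.length, ∀ b ≤ w.length, H.Adj (w.getVert a) (w.getVert b) →
      b ≤ a + 1 := by
    intro a ha b hb hab
    have h3 := SimpleGraph.Reachable.dist_triangle_left (w.take a).reachable (w.getVert b)
    rw [hdist a ha, hdist b hb, SimpleGraph.dist_eq_one_iff_adj.2 hab] at h3
    exact h3
  have hL : w.length - 1 + 1 = w.length := by omega
  have hinj : ∀ a ≤ w.length, ∀ b ≤ w.length,
      ((w.getVert a : Fin (L + 2)) : ℕ) = w.getVert b → a = b := by
    intro a ha b hb h
    rw [← hdist a ha, ← hdist b hb, Fin.ext h]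
  refine ⟨w.length - 1, by omega, fun a => w.getVert a, by simp, by simp [hL], ?_, ?_, ?_⟩
  · intro a _
    exact Nat.le_of_lt_succ (w.getVert a).2
  · rw [hL]; exact hinj
  · rw [hL]
    intro a ha b hb
    constructor
    · intro h
      have h1 := hstep a ha b hb h
      have h2 := hstep b hb a ha h.symm
      have h3 : a ≠ b := by rintro rfl; exact h.ne rfl
      omega
    · rintro (rfl | rfl)
      · exact w.adj_getVert_succ (by omega)
      · exact (w.adj_getVert_succ (by omega)).symm

/-! ### Subdivisions -/

section Subdivision

variable {n : ℕ} {H : SimpleGraph (Fin n)} {ℓ : Fin n × Fin n → ℕ}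

theorem subdivision_adj_inl_inl {i j : Fin n} (hij : i < j) :
    (subdivision n H ℓ).Adj (Sum.inl i) (Sum.inl j) ↔ H.Adj i j ∧ ℓ (i, j) = 0 := by
  refine (SimpleGraph.fromRel_adj _ _ _).trans ?_
  have h1 : (Sum.inl i : SubdivVert n H ℓ) ≠ Sum.inl j := fun h => hij.ne (Sum.inl.inj h)
  refine (and_iff_right h1).trans ?_
  simp [hij, hij.not_gt]

theorem subdivision_adj_inl_inr {i : Fin n}
    {e : {p : Fin n × Fin n // p.1 < p.2 ∧ H.Adj p.1 p.2}} {k : Fin (ℓ e.1)} :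
    (subdivision n H ℓ).Adj (Sum.inl i) (Sum.inr ⟨e, k⟩) ↔
      (e.1.1 = i ∧ (k : ℕ) = 0) ∨ (e.1.2 = i ∧ (k : ℕ) + 1 = ℓ e.1) := by
  refine (SimpleGraph.fromRel_adj _ _ _).trans ?_
  have h1 : (Sum.inl i : SubdivVert n H ℓ) ≠ Sum.inr ⟨e, k⟩ := Sum.inl_ne_inr
  refine (and_iff_right h1).trans ?_
  simp

theorem subdivision_adj_inr_inr {e e' : {p : Fin n × Fin n // p.1 < p.2 ∧ H.Adj p.1 p.2}}
    {k : Fin (ℓ e.1)} {k' : Fin (ℓ e'.1)} :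
    (subdivision n H ℓ).Adj (Sum.inr ⟨e, k⟩) (Sum.inr ⟨e', k'⟩) ↔
      e = e' ∧ ((k : ℕ) + 1 = k' ∨ (k' : ℕ) + 1 = k) := by
  refine (SimpleGraph.fromRel_adj _ _ _).trans ?_
  constructor
  · rintro ⟨-, ⟨h1, h2⟩ | ⟨h1, h2⟩⟩
    · exact ⟨Subtype.ext h1, Or.inl h2⟩
    · exact ⟨Subtype.ext h1.symm, Or.inr h2⟩
  · rintro ⟨rfl, h⟩
    refine ⟨fun hh => ?_, ?_⟩
    · have := Sum.inr.inj hh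
      simp only [Sigma.mk.injEq, heq_eq_eq, true_and] at this
      subst this
      omega
    · rcases h with h | h
      · exact Or.inl ⟨rfl, h⟩
      · exact Or.inr ⟨rfl, h⟩

/-- Code of a vertex of a subdivision: a branch vertex `i` becomes `(i, i, 0)`, the `k`-th internal
vertex of the path replacing the edge `(i, j)` becomes `(i, j, k)`. -/
def subdivCode (n : ℕ) (H : SimpleGraph (Fin n)) (ℓ : Fin n × Fin n → ℕ) :
    SubdivVert n H ℓ → Fin n × Fin n × ℕ
  | Sum.inl i => (i, i, 0)
  | Sum.inr ⟨e, k⟩ => (e.1.1, e.1.2, k)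

theorem subdivCode_injective : Function.Injective (subdivCode n H ℓ) := by
  rintro (i | ⟨⟨⟨i, j⟩, hij, he⟩, k⟩) (i' | ⟨⟨⟨i', j'⟩, hij', he'⟩, k'⟩) h
  · simp only [subdivCode, Prod.mk.injEq] at h
    rw [h.1]
  · simp only [subdivCode, Prod.mk.injEq] at h
    exact absurd (h.1.symm.trans h.2.1) hij'.ne
  · simp only [subdivCode, Prod.mk.injEq] at h
    exact absurd (h.1.trans h.2.1.symm) hij.ne
  · simp only [subdivCode, Prod.mk.injEq] at h
    obtain ⟨rfl, rfl, h⟩ := h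
    rw [Fin.ext h]

end Subdivision

/-! ### From subgraphs to induced subgraphs -/

/-- A `K_{t,t}`-free graph containing, as a subgraph, a `≤p`-subdivision of a graph with a huge clique
contains an induced `≤p`-subdivision of `K_N`. -/
theorem exists_induced_subdivision (t p N : ℕ) : ∃ M : ℕ,
    ∀ (m n : ℕ) (H : SimpleGraph (Fin m)) (G : SimpleGraph (Fin n)) (ℓ : Fin m × Fin m → ℕ),
      (∀ e, ℓ e ≤ p) → ¬ ContainsSub G (completeBipartiteGraph (Fin t) (Fin t)) →
      ContainsSub G (subdivision m H ℓ) →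
      ∀ S : Finset (Fin m), H.IsClique S → M ≤ S.card →
        ∃ ℓ' : Fin N × Fin N → ℕ, (∀ e, ℓ' e ≤ p) ∧
          ContainsInduced G (subdivision N ⊤ ℓ') := by
  obtain ⟨M, hM⟩ := exists_indiscernible p (N + 4 + 4 * t)
  refine ⟨M, ?_⟩
  rintro m n H G ℓ hℓ hfree ⟨f, hf⟩ S hS hMS
  obtain ⟨ψ₀, hψS, hψ⟩ := hM (Fin m) (fun x a b => ∃ w w',
    subdivCode m H ℓ w = (x 0, x 1, a) ∧ subdivCode m H ℓ w' = (x 2, x 3, b) ∧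
      G.Adj (f w) (f w')) S hMS
  -- Vertices whose index sets are incomparable are never adjacent in `G`. What remains possible
  -- are edges inside a single subdivided edge together with its ends.
  have hnon : ∀ (w w' : SubdivVert m H ℓ) (i j k l : Fin (N + 4 + 4 * t)) (a b : ℕ),
      a ≤ p → b ≤ p → subdivCode m H ℓ w = (ψ₀ i, ψ₀ j, a) →
      subdivCode m H ℓ w' = (ψ₀ k, ψ₀ l, b) →
      (i ≠ k ∧ i ≠ l) ∨ (j ≠ k ∧ j ≠ l) → (k ≠ i ∧ k ≠ j) ∨ (l ≠ i ∧ l ≠ j) →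
      ¬ G.Adj (f w) (f w') := by
    intro w w' i j k l a b ha hb hw hw' hIJ hJI hadj
    obtain ⟨P, Q, hP, hQ, hPQ⟩ := exists_biclique_of_indiscernible (t := t) (by omega) (by omega)
      ψ₀ (subdivCode m H ℓ) subdivCode_injective (fun w w' => G.Adj (f w) (f w'))
      hψ ha hb hw hw' hadj hIJ hJI
    apply hfree
    refine ⟨⟨Sum.elim (fun s => f (P s)) (fun s => f (Q s)), ?_⟩, ?_⟩
    · exact Function.Injective.sumElim (f.injective.comp hP) (f.injective.comp hQ)
        fun s s' => (hPQ s s').ne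
    · rintro (s | s) (s' | s') h
      · simp at h
      · exact hPQ s s'
      · exact (hPQ s' s).symm
      · simp at h
  let ψ : Fin N → Fin m := fun i => ψ₀ (Fin.castLE (by omega) i)
  have hψm : StrictMono ψ := fun i j h => ψ₀.strictMono h
  have hadj : ∀ i j, i < j → H.Adj (ψ i) (ψ j) := fun i j h =>
    hS (hψS _) (hψS _) (hψm h).ne
  let edge : ∀ i j, i < j → {p : Fin m × Fin m // p.1 < p.2 ∧ H.Adj p.1 p.2} :=
    fun i j h => ⟨(ψ i, ψ j), hψm h, hadj i j h⟩
  -- Each subdivided edge is replaced by an induced path with the same ends, with `L'` internal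
  -- vertices, selected by `σ` among the old ones.
  have hpath : ∀ e : Fin N × Fin N, ∃ L' ≤ p, ∀ h : e.1 < e.2,
      ∃ σ : Fin L' → Fin (ℓ (ψ e.1, ψ e.2)), Function.Injective σ ∧
        (G.Adj (f (Sum.inl (ψ e.1))) (f (Sum.inl (ψ e.2))) ↔ L' = 0) ∧
        (∀ a, G.Adj (f (Sum.inl (ψ e.1))) (f (Sum.inr ⟨edge e.1 e.2 h, σ a⟩)) ↔ (a : ℕ) = 0) ∧
        (∀ a, G.Adj (f (Sum.inl (ψ e.2))) (f (Sum.inr ⟨edge e.1 e.2 h, σ a⟩)) ↔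
          (a : ℕ) + 1 = L') ∧
        (∀ a b, G.Adj (f (Sum.inr ⟨edge e.1 e.2 h, σ a⟩)) (f (Sum.inr ⟨edge e.1 e.2 h, σ b⟩)) ↔
          (a : ℕ) + 1 = b ∨ (b : ℕ) + 1 = a) := by
    rintro ⟨i, j⟩
    by_cases hij : i < j
    swap
    · exact ⟨0, by omega, fun h => absurd h hij⟩
    -- The vertices of the path replacing the edge `(ψ i, ψ j)`, including both ends.
    let node : ℕ → SubdivVert m H ℓ := fun k =>
      if k = 0 then Sum.inl (ψ i) else
        if h : k - 1 < ℓ (ψ i, ψ j) then Sum.inr ⟨edge i j hij, ⟨k - 1, h⟩⟩ else Sum.inl (ψ j)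
    have node_zero : node 0 = Sum.inl (ψ i) := rfl
    have node_last : node (ℓ (ψ i, ψ j) + 1) = Sum.inl (ψ j) := by
      simp [node]; rfl
    have node_mid : ∀ k (h : k < ℓ (ψ i, ψ j)),
        node (k + 1) = Sum.inr ⟨edge i j hij, ⟨k, h⟩⟩ := by
      intro k h; simp [node, h]; rfl
    obtain ⟨L', hL', s, hs0, hs1, hsle, hsinj, hsadj⟩ :=
      exists_induced_path G (ℓ (ψ i, ψ j)) (fun k => f (node k)) (by
        intro k hk
        apply hf
        rcases Nat.eq_zero_or_pos k with rfl | hk0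
        · rw [node_zero]
          rcases Nat.eq_zero_or_pos (ℓ (ψ i, ψ j)) with h0 | h0
          · have := node_last
            rw [h0] at this
            rw [this]
            exact (subdivision_adj_inl_inl (hψm hij)).2 ⟨hadj i j hij, h0⟩
          · rw [node_mid 0 h0]
            exact subdivision_adj_inl_inr.2 (Or.inl ⟨rfl, rfl⟩)
        · obtain ⟨k, rfl⟩ := Nat.exists_eq_add_of_le' hk0
          rw [node_mid k (by omega)]
          rcases hk.eq_or_lt with h | h
          · rw [h, node_last]
            exact (subdivision_adj_inl_inr.2 (Or.inr ⟨rfl, h⟩)).symm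
          · rw [node_mid (k + 1) h]
            exact subdivision_adj_inr_inr.2 ⟨rfl, Or.inl rfl⟩)
    refine ⟨L', hL'.trans (hℓ _), fun h => ?_⟩
    have hs : ∀ a : Fin L', 1 ≤ s (a + 1) ∧ s (a + 1) - 1 < ℓ (ψ i, ψ j) := by
      intro a
      have ha := a.2
      have h1 : s (a + 1) ≠ 0 := fun h => by
        have := hsinj (a + 1) (by omega) 0 (by omega) (by rw [h, hs0])
        omega
      have h2 : s (a + 1) ≠ ℓ (ψ i, ψ j) + 1 := fun h => by
        have := hsinj (a + 1) (by omega) (L' + 1) (by omega) (by rw [h, hs1])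
        omega
      have h3 := hsle (a + 1) (by omega)
      omega
    have hnode : ∀ a : Fin L', node (s (a + 1)) =
        Sum.inr ⟨edge i j hij, ⟨s (a + 1) - 1, (hs a).2⟩⟩ := by
      intro a
      rw [← node_mid _ (hs a).2, Nat.sub_add_cancel (hs a).1]
    have hend : node (s (L' + 1)) = Sum.inl (ψ j) := by rw [hs1, node_last]
    have hstart : node (s 0) = Sum.inl (ψ i) := by rw [hs0, node_zero]
    refine ⟨fun a => ⟨s (a + 1) - 1, (hs a).2⟩, ?_, ?_, ?_, ?_, ?_⟩
    · intro a b hab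
      have h1 := (hs a).1
      have h2 := (hs b).1
      have ha := a.2
      have hb := b.2
      have h3 := Fin.mk.inj hab
      have := hsinj (a + 1) (by omega) (b + 1) (by omega) (by omega)
      exact Fin.ext (by omega)
    · have := hsadj 0 (by omega) (L' + 1) (by omega)
      simp only [hend, hstart] at this
      rw [this]; omega
    · intro a
      have ha := a.2
      have := hsadj 0 (by omega) (a + 1) (by omega)
      simp only [hnode, hstart] at this
      rw [this]; omega
    · intro a
      have ha := a.2
      have := hsadj (L' + 1) (by omega) (a + 1) (by omega)
      simp only [hnode, hend] at this
      rw [this]; omega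
    · intro a b
      have ha := a.2
      have hb := b.2
      have := hsadj (a + 1) (by omega) (b + 1) (by omega)
      simp only [hnode] at this
      rw [this]; omega
  choose ℓ' hℓ' hpath using hpath
  choose σ hσ h00 h0 h1 hσσ using hpath
  have hbr : ∀ i j : Fin N, i < j → (G.Adj (f (Sum.inl (ψ i))) (f (Sum.inl (ψ j))) ↔
      (subdivision N ⊤ ℓ').Adj (Sum.inl i) (Sum.inl j)) := by
    intro i j hij
    rw [subdivision_adj_inl_inl hij]
    have := h00 (i, j) hij
    simpa [hij.ne] using this
  have hbi : ∀ (i : Fin N) (e : {p : Fin N × Fin N // p.1 < p.2 ∧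
      (⊤ : SimpleGraph (Fin N)).Adj p.1 p.2}) (a : Fin (ℓ' e.1)),
      (G.Adj (f (Sum.inl (ψ i))) (f (Sum.inr ⟨edge e.1.1 e.1.2 e.2.1, σ e.1 e.2.1 a⟩)) ↔
        (subdivision N ⊤ ℓ').Adj (Sum.inl i) (Sum.inr ⟨e, a⟩)) := by
    rintro i ⟨⟨j, k⟩, hjk, hjk'⟩ a
    rw [subdivision_adj_inl_inr]
    by_cases hj : j = i
    · subst hj
      rw [h0 (j, k) hjk a]
      have : k ≠ j := hjk.ne'
      simp [this]
    by_cases hk : k = i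
    · subst hk
      rw [h1 (j, k) hjk a]
      simp [hj]
    have hjk0 : j ≠ k := hjk.ne
    have := hnon (Sum.inl (ψ i)) (Sum.inr ⟨edge j k hjk, σ (j, k) hjk a⟩) _ _ _ _ 0 _
      (by omega) ((σ (j, k) hjk a).2.le.trans (hℓ _)) rfl rfl
      (by simp [Fin.ext_iff] at *; omega) (by simp [Fin.ext_iff] at *; omega)
    simp [hj, hk, this]
  refine ⟨ℓ', hℓ', ⟨⟨fun x => f (match x with
    | Sum.inl i => Sum.inl (ψ i)
    | Sum.inr ⟨e, a⟩ => Sum.inr ⟨edge e.1.1 e.1.2 e.2.1, σ e.1 e.2.1 a⟩), ?_⟩, ?_⟩⟩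
  · refine f.injective.comp ?_
    rintro (i | ⟨⟨⟨i, j⟩, hij, hij'⟩, a⟩) (k | ⟨⟨⟨k, l⟩, hkl, hkl'⟩, b⟩) h
    · have := hψm.injective (Sum.inl.inj h)
      rw [this]
    · exact absurd h Sum.inl_ne_inr
    · exact absurd h Sum.inr_ne_inl
    · have h := Sum.inr.inj h
      have h2 := congrArg (fun x => x.1.1) h
      simp only [edge, Prod.mk.injEq] at h2
      have hik := hψm.injective h2.1
      have hjl := hψm.injective h2.2
      subst hik hjl
      simp only [Sigma.mk.injEq, heq_eq_eq, true_and] at h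
      rw [hσ _ _ h]
  · rintro (i | ⟨⟨⟨i, j⟩, hij, hij'⟩, a⟩) (k | ⟨⟨⟨k, l⟩, hkl, hkl'⟩, b⟩)
    · rcases lt_trichotomy i k with h | rfl | h
      · exact (hbr i k h).symm
      · exact ⟨fun h => absurd rfl h.ne, fun h => absurd rfl h.ne⟩
      · exact ⟨fun h' => ((hbr k i h).2 h'.symm).symm, fun h' => ((hbr k i h).1 h'.symm).symm⟩
    · exact (hbi i _ b).symm
    · exact ⟨fun h => ((hbi k _ a).2 h.symm).symm, fun h => ((hbi k _ a).1 h.symm).symm⟩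
    · rw [subdivision_adj_inr_inr]
      by_cases hik : i = k ∧ j = l
      · obtain ⟨rfl, rfl⟩ := hik
        have := hσσ (i, j) hij a b
        simp only [true_and]
        exact this.symm
      · have hij_val : (i : ℕ) < j := hij
        have hkl_val : (k : ℕ) < l := hkl
        simp only [Fin.ext_iff] at hik
        have := hnon (Sum.inr ⟨edge i j hij, σ (i, j) hij a⟩)
          (Sum.inr ⟨edge k l hkl, σ (k, l) hkl b⟩) _ _ _ _ _ _
          ((σ (i, j) hij a).2.le.trans (hℓ _)) ((σ (k, l) hkl b).2.le.trans (hℓ _)) rfl rfl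
          (by simp only [ne_eq, Fin.ext_iff, Fin.val_castLE]; omega)
          (by simp only [ne_eq, Fin.ext_iff, Fin.val_castLE]; omega)
        refine ⟨fun h => absurd ?_ hik, fun h => absurd h this⟩
        simpa [Fin.ext_iff] using h.1

/-- A hereditary, isomorphism-closed, weakly sparse class of finite graphs is nowhere dense iff
for some `f : ℕ → ℕ` and every `k`, no graph of the class is (isomorphic to) a
`≤k`-subdivision of a complete graph of order greater than `f k`. -/
theorem nowhereDense_iff_no_large_subdivided_cliques
    (C : ∀ n : ℕ, SimpleGraph (Fin n) → Prop)
    (hIso : ∀ (n m : ℕ) (G : SimpleGraph (Fin n)) (H : SimpleGraph (Fin m)),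
      Nonempty (G ≃g H) → C n G → C m H)
    (hHered : ∀ (n : ℕ) (G : SimpleGraph (Fin n)), C n G →
      ∀ (m : ℕ) (H : SimpleGraph (Fin m)), IsInducedIn H G → C m H)
    (hWS : ∃ t : ℕ, ∀ (n : ℕ) (G : SimpleGraph (Fin n)), C n G →
      ¬ ContainsSub G (completeBipartiteGraph (Fin t) (Fin t))) :
    NowhereDense C ↔
      ∃ f : ℕ → ℕ, ∀ (k n : ℕ) (G : SimpleGraph (Fin n)), C n G →
        ∀ N : ℕ, f k < N → ∀ ℓ : Fin N × Fin N → ℕ, (∀ e, ℓ e ≤ k) →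
          ¬ Nonempty (G ≃g subdivision N ⊤ ℓ) := by
  constructor
  · rintro ⟨g, hg⟩
    refine ⟨g, ?_⟩
    rintro k n G hG N hN ℓ hℓ ⟨φ⟩
    have h := hg k N ⊤ ⟨n, G, ℓ, hG, fun e => (hℓ e).trans (by omega),
      φ.symm.toEmbedding.toEmbedding, fun u v huv => φ.symm.map_rel_iff.2 huv⟩
    obtain ⟨A, -, hA⟩ := Finset.exists_subset_card_eq
      (s := (Finset.univ : Finset (Fin N))) (n := g k + 1) (by simpa using hN)
    exact h A ⟨fun x _ y _ hxy => hxy, hA⟩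
  · rintro ⟨f, hf⟩
    obtain ⟨t, ht⟩ := hWS
    choose M hM using fun r => exists_induced_subdivision t (2 * r) (f (2 * r) + 1)
    refine ⟨M, ?_⟩
    rintro r m H ⟨n, G, ℓ, hG, hℓ, hsub⟩ S hS
    obtain ⟨ℓ', hℓ', F, hF⟩ := hM r m n H G ℓ hℓ (ht n G hG) hsub S hS.isClique
      (by rw [hS.card_eq]; omega)
    have : Finite (SubdivVert (f (2 * r) + 1) ⊤ ℓ') := Finite.of_injective F F.injective
    obtain ⟨N', ⟨ε⟩⟩ := Finite.exists_equiv_fin (SubdivVert (f (2 * r) + 1) ⊤ ℓ')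
    have hC : C N' ((subdivision (f (2 * r) + 1) ⊤ ℓ').comap ε.symm) :=
      hHered n G hG _ _ ⟨ε.symm.toEmbedding.trans F, fun u v => hF _ _⟩
    exact hf (2 * r) N' _ hC _ (Nat.lt_succ_self _) ℓ' hℓ'
      ⟨SimpleGraph.Iso.comap ε.symm _⟩
end

section
/- For every finite simple graph G with linear NLC-width at most k, the chromatic number satisfies χ(G) ≤ (k·2^{k+1})^{3k^k} · ω(G), where ω(G) is the clique number of G. -/
/-!
The vertices are numbered by their position in the word.  Write `recol r s t` for the recoloring
`r (t-1) ∘ ⋯ ∘ r s`; then positions `x < y` are adjacent iff `recol r (x+1) y (c x) ∈ e y`.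

The vertex set is partitioned into at most `(k * 2 ^ (k + 1)) ^ k` parts, each of which induces a
perfect graph.  This gives `χ ≤ (k * 2 ^ (k + 1)) ^ k * ω`, which is stronger than required.

The partition is found by induction on a rank.  A set `T` of cut positions has rank at most `j` if
`recol r a b` has at most `j` values for all cuts `a < b`.  Starting with all positions
(rank at most `k`), cuts are thinned out greedily: from a kept cut `s`, the next kept cut is the
first `t` with `recol r s t` of rank `≤ j` (`Thin`).  The kept cuts have rank `≤ j`, and inside a
new block all maps `recol r s u` to an old cut `u` have rank exactly `j + 1`.  Let `E` be the last
old cut of the new block.  For an old cut `a` of the block, `recol r a E` is injective on the image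
of `recol r s a`, so the color of an earlier vertex at time `a` can be recovered from its color at
time `E`, which is `recol r (x+1) E (c x)` for the vertex `x`.  Hence whether
vertices `x < y` of the block that lie in old
blocks which are neither equal nor consecutive are adjacent depends only on this color of `x` and
on a set of colors attached to `y` (`adj_iff_of_rank`).  Splitting each new block according to this
color, this set and the parity of the old block therefore yields `k * 2 ^ (k + 1)` classes in each
of which the pieces from distinct old blocks are pairwise completely joined or pairwise
non-adjacent, so that the class can be partitioned as economically as the old blocks
(`PerfectPart.of_blocks`).  At rank `0` a single block is left.
-/

open scoped Classical

/-- A letter of the alphabet `Ω_k(V)`: a vertex `v`, a color `c ∈ [k]`, a set of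
colors `e ⊆ [k]` and a recoloring `r : [k] → [k]`. -/
structure NLCLetter (V : Type) (k : ℕ) where
  v : V
  c : Fin k
  e : Finset (Fin k)
  r : Fin k → Fin k

/-- One step of building the colored graph `Ξ(α)`: the state consists of the adjacency relation
built so far together with the (partial) coloring of the vertices introduced so far.  Processing
a letter `a` adds the vertex `a.v` with color `a.c`, joins it to all current vertices whose
current color lies in `a.e`, and then recolors every old vertex by `a.r`. -/
noncomputable def nlcStep {V : Type} {k : ℕ}
    (st : (V → V → Prop) × (V → Option (Fin k))) (a : NLCLetter V k) :
    (V → V → Prop) × (V → Option (Fin k)) :=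
  (fun x y => st.1 x y ∨
      (x = a.v ∧ ∃ cy ∈ a.e, st.2 y = some cy) ∨
      (y = a.v ∧ ∃ cx ∈ a.e, st.2 x = some cx),
   fun x => if x = a.v then some a.c else (st.2 x).map a.r)

/-- The colored graph `Ξ(α)` associated with a word `α` over `Ω_k(V)`, as a pair
(adjacency relation, partial coloring). -/
noncomputable def nlcRun {V : Type} {k : ℕ} (α : List (NLCLetter V k)) :
    (V → V → Prop) × (V → Option (Fin k)) :=
  α.foldl nlcStep (fun _ _ => False, fun _ => none)

/-- The graph `G` is `Ξ(α)` (forgetting colors) for some admissible word `α` of width `k`,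
i.e. `G` has linear NLC-width at most `k` witnessed at width exactly `k`. -/
noncomputable def LinNLCWitness {V : Type} [Fintype V] (G : SimpleGraph V) (k : ℕ) : Prop :=
  ∃ α : List (NLCLetter V k), (α.map NLCLetter.v).Nodup ∧
    (∀ x : V, x ∈ α.map NLCLetter.v) ∧
    (∀ x y : V, G.Adj x y ↔ (nlcRun α).1 x y)

/-- `G` has linear NLC-width at most `k`. -/
noncomputable def LinNLCWidthLE {V : Type} [Fintype V] (G : SimpleGraph V) (k : ℕ) : Prop :=
  ∃ k' : ℕ, k' ≤ k ∧ LinNLCWitness G k'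

/-! ### Perfect sets and partitions into them -/

/-- The finite set `S` admits a proper coloring with `n` colors and contains a clique of size `n`,
for some `n`; that is, `χ = ω` for the subgraph induced on `S`. -/
def Tight (H : SimpleGraph ℕ) (S : Finset ℕ) : Prop :=
  ∃ n : ℕ, (∃ t ⊆ S, H.IsNClique n t) ∧
    ∃ c : ℕ → ℕ, (∀ x ∈ S, c x < n) ∧ ∀ x ∈ S, ∀ y ∈ S, H.Adj x y → c x ≠ c y

lemma tight_empty (H : SimpleGraph ℕ) : Tight H ∅ :=
  ⟨0, ⟨∅, by simp, by simp [SimpleGraph.isNClique_iff]⟩, fun _ => 0, by simp, by simp⟩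

lemma tight_singleton (H : SimpleGraph ℕ) (a : ℕ) : Tight H {a} :=
  ⟨1, ⟨{a}, by simp, by simp [SimpleGraph.isNClique_iff]⟩, fun _ => 0, by simp, by simp⟩

/-- Tightness passes to disjoint unions and to joins. -/
lemma Tight.union {H : SimpleGraph ℕ} {A B : Finset ℕ} (hA : Tight H A) (hB : Tight H B)
    (hd : Disjoint A B) (θ : Prop) (hθ : ∀ x ∈ A, ∀ y ∈ B, (H.Adj x y ↔ θ)) :
    Tight H (A ∪ B) := by
  obtain ⟨n₁, ⟨t₁, ht₁, hc₁⟩, c₁, hlt₁, hp₁⟩ := hA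
  obtain ⟨n₂, ⟨t₂, ht₂, hc₂⟩, c₂, hlt₂, hp₂⟩ := hB
  have hBA : ∀ x ∈ B, x ∉ A := fun x hx hx' => Finset.disjoint_left.1 hd hx' hx
  by_cases h : θ
  · have hadj : ∀ x ∈ A, ∀ y ∈ B, H.Adj x y := fun x hx y hy => (hθ x hx y hy).2 h
    refine ⟨n₁ + n₂, ⟨t₁ ∪ t₂, Finset.union_subset_union ht₁ ht₂, ?_⟩,
      fun x => if x ∈ A then c₁ x else n₁ + c₂ x, ?_, ?_⟩
    · rw [SimpleGraph.isNClique_iff] at hc₁ hc₂ ⊢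
      refine ⟨?_, ?_⟩
      · intro x hx y hy hxy
        simp only [Finset.coe_union, Set.mem_union, Finset.mem_coe] at hx hy
        rcases hx with hx | hx <;> rcases hy with hy | hy
        · exact hc₁.1 hx hy hxy
        · exact hadj x (ht₁ hx) y (ht₂ hy)
        · exact (hadj y (ht₁ hy) x (ht₂ hx)).symm
        · exact hc₂.1 hx hy hxy
      · rw [Finset.card_union_of_disjoint (Finset.disjoint_of_subset_left ht₁
          (Finset.disjoint_of_subset_right ht₂ hd)), hc₁.2, hc₂.2]
    · intro x hx
      rcases Finset.mem_union.1 hx with hx | hx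
      · have := hlt₁ x hx
        simp only [hx, if_true]; omega
      · have := hlt₂ x hx
        simp only [hBA x hx, if_false]; omega
    · intro x hx y hy hxy
      rcases Finset.mem_union.1 hx with hx | hx <;> rcases Finset.mem_union.1 hy with hy | hy
      · simpa only [hx, hy, if_true] using hp₁ x hx y hy hxy
      · have := hlt₁ x hx
        simp only [hx, hBA y hy, if_true, if_false]; omega
      · have := hlt₁ y hy
        simp only [hy, hBA x hx, if_true, if_false]; omega
      · have := hp₂ x hx y hy hxy
        simp only [hBA x hx, hBA y hy, if_false]; omega
  · have hadj : ∀ x ∈ A, ∀ y ∈ B, ¬ H.Adj x y := fun x hx y hy h' => h ((hθ x hx y hy).1 h')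
    refine ⟨max n₁ n₂, ?_, fun x => if x ∈ A then c₁ x else c₂ x, ?_, ?_⟩
    · rcases le_total n₁ n₂ with hn | hn
      · rw [max_eq_right hn]
        exact ⟨t₂, ht₂.trans Finset.subset_union_right, hc₂⟩
      · rw [max_eq_left hn]
        exact ⟨t₁, ht₁.trans Finset.subset_union_left, hc₁⟩
    · intro x hx
      rcases Finset.mem_union.1 hx with hx | hx
      · have := hlt₁ x hx
        simp only [hx, if_true]; omega
      · have := hlt₂ x hx
        simp only [hBA x hx, if_false]; omega
    · intro x hx y hy hxy
      rcases Finset.mem_union.1 hx with hx | hx <;> rcases Finset.mem_union.1 hy with hy | hy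
      · simpa only [hx, hy, if_true] using hp₁ x hx y hy hxy
      · exact absurd hxy (hadj x hx y hy)
      · exact absurd hxy.symm (hadj y hy x hx)
      · simpa only [hBA x hx, hBA y hy, if_false] using hp₂ x hx y hy hxy

lemma Tight.of_blocks {H : SimpleGraph ℕ} {S : Finset ℕ} (b : ℕ → ℕ) (θ : Prop)
    (hb : ∀ a, Tight H (S.filter fun x => b x = a))
    (hθ : ∀ x ∈ S, ∀ y ∈ S, b x ≠ b y → (H.Adj x y ↔ θ)) : Tight H S := by
  have key : ∀ B : Finset ℕ, Tight H (S.filter fun x => b x ∈ B) := by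
    intro B
    induction B using Finset.induction_on with
    | empty => simpa using tight_empty H
    | insert a B ha ih =>
      have heq : (S.filter fun x => b x ∈ insert a B) =
          (S.filter fun x => b x = a) ∪ (S.filter fun x => b x ∈ B) := by
        ext x; simp only [Finset.mem_filter, Finset.mem_insert, Finset.mem_union]; tauto
      rw [heq]
      refine (hb a).union ih ?_ θ ?_
      · rw [Finset.disjoint_left]
        intro x hx hx'
        rw [Finset.mem_filter] at hx hx'
        exact ha (hx.2 ▸ hx'.2)
      · intro x hx y hy
        rw [Finset.mem_filter] at hx hy
        refine hθ x hx.1 y hy.1 ?_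
        rintro h
        exact ha (hx.2 ▸ h ▸ hy.2)
  have := key (S.image b)
  rwa [Finset.filter_true_of_mem (fun x hx => Finset.mem_image_of_mem b hx)] at this

/-- The subgraph induced on `S` is perfect: all subsets of `S` are tight. -/
def PerfectOn (H : SimpleGraph ℕ) (S : Finset ℕ) : Prop :=
  ∀ S' ⊆ S, Tight H S'

/-- `S` can be partitioned into `M` (possibly empty) sets inducing perfect subgraphs. -/
def PerfectPart (H : SimpleGraph ℕ) (M : ℕ) (S : Finset ℕ) : Prop :=
  ∃ γ : ℕ → Fin M, ∀ g, PerfectOn H (S.filter fun x => γ x = g)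

lemma PerfectPart.mono {H : SimpleGraph ℕ} {M : ℕ} {S S' : Finset ℕ} (h : PerfectPart H M S)
    (hS : S' ⊆ S) : PerfectPart H M S' := by
  obtain ⟨γ, hγ⟩ := h
  exact ⟨γ, fun g A hA => hγ g A (hA.trans (Finset.filter_subset_filter _ hS))⟩

/-- If a coloring `κ` controls the adjacency between distinct blocks of `b`, partitions of the
blocks can be combined at the cost of a factor equal to the number of values of `κ`. -/
lemma PerfectPart.of_blocks {H : SimpleGraph ℕ} {S : Finset ℕ} {M : ℕ} {K : Type} [Fintype K]
    (b : ℕ → ℕ) (κ : ℕ → K) (θ : K → Prop)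
    (hb : ∀ a, PerfectPart H M (S.filter fun x => b x = a))
    (hθ : ∀ x ∈ S, ∀ y ∈ S, b x < b y → κ x = κ y → (H.Adj x y ↔ θ (κ x))) :
    PerfectPart H (Fintype.card K * M) S := by
  choose γ hγ using hb
  let φ : K × Fin M ≃ Fin (Fintype.card K * M) := Fintype.equivFinOfCardEq (by simp)
  refine ⟨fun x => φ (κ x, γ (b x) x), fun g A hA => ?_⟩
  have hA' : ∀ x ∈ A, x ∈ S ∧ κ x = (φ.symm g).1 ∧ γ (b x) x = (φ.symm g).2 := by
    intro x hx
    have := Finset.mem_filter.1 (hA hx)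
    refine ⟨this.1, ?_, ?_⟩ <;> simp [← this.2]
  refine Tight.of_blocks b (θ (φ.symm g).1) (fun a => ?_) ?_
  · refine hγ a (φ.symm g).2 _ fun x hx => ?_
    obtain ⟨hxA, rfl⟩ := Finset.mem_filter.1 hx
    obtain ⟨h₁, -, h₃⟩ := hA' x hxA
    simp [h₁, h₃]
  · intro x hx y hy hxy
    obtain ⟨h₁, h₂, -⟩ := hA' x hx
    obtain ⟨h₁', h₂', -⟩ := hA' y hy
    rcases lt_or_gt_of_ne hxy with h | h
    · rw [← h₂]; exact hθ x h₁ y h₁' h (h₂.trans h₂'.symm)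
    · rw [← h₂', H.adj_comm]; exact hθ y h₁' x h₁ h (h₂'.trans h₂.symm)

/-! ### Composed recolorings -/

section Word

variable {k : ℕ}

/-- The composed recoloring `r (t-1) ∘ ⋯ ∘ r s`; the identity if `t ≤ s`. -/
def recol (r : ℕ → Fin k → Fin k) (s : ℕ) : ℕ → Fin k → Fin k
  | 0 => id
  | t + 1 => if s ≤ t then r t ∘ recol r s t else id

lemma recol_self (r : ℕ → Fin k → Fin k) (s : ℕ) : recol r s s = id := by
  cases s <;> simp [recol]

lemma recol_comp (r : ℕ → Fin k → Fin k) {s t u : ℕ} (hst : s ≤ t) (htu : t ≤ u) (q : Fin k) :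
    recol r t u (recol r s t q) = recol r s u q := by
  induction u, htu using Nat.le_induction with
  | base => simp [recol_self]
  | succ u htu ih => simp [recol, htu, hst.trans htu, ih]

/-- The image of a composed recoloring. -/
noncomputable def img (r : ℕ → Fin k → Fin k) (s t : ℕ) : Finset (Fin k) :=
  Finset.univ.image (recol r s t)

lemma mem_img {r : ℕ → Fin k → Fin k} {s t : ℕ} (q : Fin k) : recol r s t q ∈ img r s t :=
  Finset.mem_image_of_mem _ (Finset.mem_univ q)

lemma img_subset (r : ℕ → Fin k → Fin k) {s t u : ℕ} (hst : s ≤ t) (htu : t ≤ u) :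
    img r s u ⊆ img r t u := by
  intro z hz
  obtain ⟨q, -, rfl⟩ := Finset.mem_image.1 hz
  rw [← recol_comp r hst htu]
  exact mem_img _

lemma img_image (r : ℕ → Fin k → Fin k) {s t u : ℕ} (hst : s ≤ t) (htu : t ≤ u) :
    (img r s t).image (recol r t u) = img r s u := by
  ext z; simp [img, recol_comp r hst htu]

/-- The graph on positions described by the word with colors `c`, join sets `e` and
recolorings `r`. -/
def wordGraph (r : ℕ → Fin k → Fin k) (c : ℕ → Fin k) (e : ℕ → Finset (Fin k)) :
    SimpleGraph ℕ where
  Adj x y := (x < y ∧ recol r (x + 1) y (c x) ∈ e y) ∨ (y < x ∧ recol r (y + 1) x (c y) ∈ e x)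
  symm := ⟨fun _ _ h => h.symm⟩
  loopless := ⟨fun _ h => by simp at h⟩

/-! ### Cuts and blocks -/

/-- The last cut at or before `x`; it identifies the block of `x`. -/
noncomputable def lastCut (T : ℕ → Prop) (x : ℕ) : ℕ := Nat.findGreatest T x

lemma lastCut_le (T : ℕ → Prop) (x : ℕ) : lastCut T x ≤ x := Nat.findGreatest_le x

lemma lastCut_mem {T : ℕ → Prop} (h0 : T 0) (x : ℕ) : T (lastCut T x) :=
  Nat.findGreatest_spec (Nat.zero_le x) h0

lemma le_lastCut {T : ℕ → Prop} {a x : ℕ} (ha : T a) (h : a ≤ x) : a ≤ lastCut T x :=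
  Nat.le_findGreatest h ha

/-- The parity of the number of the block of `x`. -/
noncomputable def blockParity (T : ℕ → Prop) (x : ℕ) : Bool :=
  ((Finset.range (x + 1)).filter T).card.bodd

/-- Distinct blocks of equal parity are not consecutive. -/
lemma exists_cut_between {T : ℕ → Prop} (h0 : T 0) {x y : ℕ} (hxy : lastCut T x < lastCut T y)
    (hp : blockParity T x = blockParity T y) : ∃ a, T a ∧ x < a ∧ a < lastCut T y := by
  by_contra! hno
  have hxl : x < lastCut T y := by
    by_contra! h
    exact absurd (le_lastCut (lastCut_mem h0 y) h) (not_le.2 hxy)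
  have heq : (Finset.range (y + 1)).filter T =
      insert (lastCut T y) ((Finset.range (x + 1)).filter T) := by
    ext a
    simp only [Finset.mem_filter, Finset.mem_range, Finset.mem_insert]
    constructor
    · rintro ⟨ha, hTa⟩
      by_cases hax : a ≤ x
      · exact Or.inr ⟨by omega, hTa⟩
      · have h₁ := hno a hTa (by omega)
        have h₂ := le_lastCut hTa (show a ≤ y by omega)
        exact Or.inl (by omega)
    · rintro (rfl | ⟨ha, hTa⟩)
      · exact ⟨by have := lastCut_le T y; omega, lastCut_mem h0 y⟩
      · exact ⟨by have := lastCut_le T y; omega, hTa⟩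
  have hnot : lastCut T y ∉ (Finset.range (x + 1)).filter T := by
    simp only [Finset.mem_filter, Finset.mem_range, not_and]; omega
  unfold blockParity at hp
  rw [heq, Finset.card_insert_of_notMem hnot, Nat.bodd_succ] at hp
  simp at hp

/-- The greedy thinning of the cut set `T` at rank `j`: after a kept cut `s`, the next kept cut is
the first cut `t` for which `recol r s t` has at most `j` values. -/
inductive Thin (r : ℕ → Fin k → Fin k) (T : ℕ → Prop) (j : ℕ) : ℕ → Prop
  | zero : Thin r T j 0
  | next {s t : ℕ} (hs : Thin r T j s) (ht : T t) (hst : s < t) (hr : (img r s t).card ≤ j)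
      (hmin : ∀ u, T u → s < u → u < t → j < (img r s u).card) : Thin r T j t

lemma Thin.mem {r : ℕ → Fin k → Fin k} {T : ℕ → Prop} {j : ℕ} (h0 : T 0) {t : ℕ}
    (h : Thin r T j t) : T t := by
  cases h with
  | zero => exact h0
  | next _ ht _ _ _ => exact ht

lemma Thin.rank_le {r : ℕ → Fin k → Fin k} {T : ℕ → Prop} {j : ℕ} (h0 : T 0) :
    ∀ b a, Thin r T j a → Thin r T j b → a < b → (img r a b).card ≤ j := by
  intro b
  induction b using Nat.strong_induction_on with
  | _ b ih =>
    intro a ha hb hab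
    cases hb with
    | zero => omega
    | @next s _ hs ht hst hr hmin =>
      rcases lt_trichotomy a s with h | rfl | h
      · exact (Finset.card_le_card (img_subset r h.le hst.le)).trans hr
      · exact hr
      · exact absurd (ih a hab s hs ha h) (not_le.2 (hmin a (ha.mem h0) h hab))

/-- Inside a block of the thinned cuts, starting at `s`, the rank does not drop to `j`. -/
lemma Thin.lt_rank {r : ℕ → Fin k → Fin k} {T : ℕ → Prop} {j : ℕ} {s y u : ℕ}
    (hs : lastCut (Thin r T j) y = s) (hTu : T u) (hsu : s < u) (huy : u ≤ y) :
    j < (img r s u).card := by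
  have hmem : Thin r T j s := hs ▸ lastCut_mem Thin.zero y
  by_contra! hle
  have hex : ∃ u, T u ∧ s < u ∧ (img r s u).card ≤ j := ⟨u, hTu, hsu, hle⟩
  obtain ⟨h₁, h₂, h₃⟩ := Nat.find_spec hex
  have hmin : Nat.find hex ≤ u := Nat.find_min' hex ⟨hTu, hsu, hle⟩
  have hnext : Thin r T j (Nat.find hex) := by
    refine Thin.next hmem h₁ h₂ h₃ fun v hv hsv hvt => ?_
    by_contra! hv'
    exact Nat.find_min hex hvt ⟨hv, hsv, hv'⟩
  have := le_lastCut hnext (hmin.trans huy)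
  omega

/-! ### The partition -/

/-- The set of colors attached to `y` in a block that starts at `s`, where `a` is the last cut
before `y` and `E` the reference cut: the colors at time `E` of those colors of `img r s a` that
are joined to `y`. -/
noncomputable def joinSet (r : ℕ → Fin k → Fin k) (e : ℕ → Finset (Fin k)) (s a E y : ℕ) :
    Finset (Fin k) :=
  ((img r s a).filter fun z => recol r a y z ∈ e y).image (recol r a E)

/-- If the rank is constant along the cuts `s < a ≤ E`, and some cut `b` separates `x` from the
last cut `a` before `y`, adjacency of `x` and `y` is read off from colors at time `E`. -/
lemma adj_iff_of_rank (r : ℕ → Fin k → Fin k) (c : ℕ → Fin k) (e : ℕ → Finset (Fin k))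
    {s x b a y E : ℕ} (hsx : s ≤ x) (hxb : x < b) (hba : b < a) (hay : a ≤ y) (haE : a ≤ E)
    (h₁ : (img r b a).card ≤ (img r s a).card) (h₂ : (img r s a).card ≤ (img r s E).card) :
    (wordGraph r c e).Adj x y ↔ recol r (x + 1) E (c x) ∈ joinSet r e s a E y := by
  have hadj : (wordGraph r c e).Adj x y ↔ recol r (x + 1) y (c x) ∈ e y := by
    have hlt : x < y := by omega
    simp [wordGraph, hlt, hlt.not_gt]
  have himg : img r s a = img r b a :=
    Finset.eq_of_subset_of_card_le (img_subset r (by omega) hba.le) h₁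
  have hz : recol r (x + 1) a (c x) ∈ img r s a := by
    rw [himg, ← recol_comp r (show x + 1 ≤ b by omega) hba.le]
    exact mem_img _
  have hinj : Set.InjOn (recol r a E) (img r s a) := by
    apply Finset.injOn_of_card_image_eq
    apply le_antisymm Finset.card_image_le
    rwa [img_image r (by omega) haE]
  rw [hadj, joinSet, Finset.mem_image, ← recol_comp r (show x + 1 ≤ a by omega) hay,
    ← recol_comp r (show x + 1 ≤ a by omega) haE]
  constructor
  · intro h
    exact ⟨_, Finset.mem_filter.2 ⟨hz, h⟩, rfl⟩
  · rintro ⟨z, hz', heq⟩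
    obtain ⟨hz₁, hz₂⟩ := Finset.mem_filter.1 hz'
    rwa [← hinj hz₁ hz heq]

/-- Induction on the rank bound `j` of a set of cuts: each unit of rank costs one application of
`PerfectPart.of_blocks`, with the blocks of `T` inside a block of its thinning. -/
lemma perfectPart_of_cuts (r : ℕ → Fin k → Fin k) (c : ℕ → Fin k) (e : ℕ → Finset (Fin k))
    (n j : ℕ) : ∀ (M : ℕ) (T : ℕ → Prop), T 0 →
      (∀ a b, T a → T b → a < b → (img r a b).card ≤ j) →
      (∀ s, PerfectPart (wordGraph r c e) M
        ((Finset.range n).filter fun x => lastCut T x = s)) →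
      PerfectPart (wordGraph r c e) ((k * 2 ^ (k + 1)) ^ j * M) (Finset.range n) := by
  induction j with
  | zero =>
    intro M T h0 hT hM
    have hlast : ∀ x, lastCut T x = 0 := by
      intro x
      by_contra hx
      have h := hT 0 _ h0 (lastCut_mem h0 x) (Nat.pos_of_ne_zero hx)
      rw [Nat.le_zero, Finset.card_eq_zero] at h
      -- a vertex color exists, so no composed recoloring has an empty image
      have := mem_img (r := r) (s := 0) (t := lastCut T x) (c 0)
      simp [h] at this
    simpa [hlast] using hM 0
  | succ j ih =>
    intro M T h0 hT hM
    have hC : (k * 2 ^ (k + 1)) ^ (j + 1) * M =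
        (k * 2 ^ (k + 1)) ^ j * (Fintype.card (Fin k × Finset (Fin k) × Bool) * M) := by
      simp; ring
    rw [hC]
    refine ih _ (Thin r T j) Thin.zero (fun a b ha hb => Thin.rank_le h0 b a ha hb) fun s => ?_
    set S := (Finset.range n).filter fun x => lastCut (Thin r T j) x = s with hS
    have hSmem : ∀ x ∈ S, lastCut (Thin r T j) x = s := fun x hx => (Finset.mem_filter.1 hx).2
    -- the last cut of `T` in the block `S`
    let E := S.sup (lastCut T)
    refine PerfectPart.of_blocks (lastCut T)
      (fun x => (recol r (x + 1) E (c x), joinSet r e s (lastCut T x) E x, blockParity T x))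
      (fun p => p.1 ∈ p.2.1)
      (fun a => (hM a).mono (Finset.filter_subset_filter _ (Finset.filter_subset _ _))) ?_
    intro x hx y hy hxy hκ
    simp only [Prod.mk.injEq] at hκ
    obtain ⟨-, hκ₂, hκ₃⟩ := hκ
    obtain ⟨b, hTb, hxb, hby⟩ := exists_cut_between h0 hxy hκ₃
    have hs : Thin r T j s := hSmem x hx ▸ lastCut_mem Thin.zero x
    have hsx : s ≤ x := hSmem x hx ▸ lastCut_le _ x
    have haE : lastCut T y ≤ E := Finset.le_sup hy
    obtain ⟨w, hw, hwE⟩ := Finset.exists_mem_eq_sup S ⟨y, hy⟩ (lastCut T)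
    have hTE : T E := by
      change T (S.sup (lastCut T)); rw [hwE]; exact lastCut_mem h0 w
    have hEw : E ≤ w := by
      change S.sup (lastCut T) ≤ w; rw [hwE]; exact lastCut_le T w
    have hTa := lastCut_mem h0 y
    have hra := Thin.lt_rank (hSmem y hy) hTa (by omega) (lastCut_le T y)
    have hrE := Thin.lt_rank (hSmem w hw) hTE (by omega) hEw
    have hra' := hT s _ (hs.mem h0) hTa (by omega)
    have hba := hT b _ hTb hTa hby
    dsimp only
    rw [hκ₂]
    exact adj_iff_of_rank r c e hsx hxb hby (lastCut_le T y) haE (by omega) (by omega)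

lemma perfectPart_range (r : ℕ → Fin k → Fin k) (c : ℕ → Fin k) (e : ℕ → Finset (Fin k)) (n : ℕ) :
    PerfectPart (wordGraph r c e) ((k * 2 ^ (k + 1)) ^ k) (Finset.range n) := by
  have h := perfectPart_of_cuts r c e n k 1 (fun _ => True) trivial
    (fun a b _ _ _ => (Finset.card_le_univ _).trans (by simp)) fun s => ?_
  · simpa using h
  · refine ⟨fun _ => 0, fun g A hA => ?_⟩
    have hlast : ∀ x, lastCut (fun _ => True) x = x := fun x =>
      le_antisymm (lastCut_le _ x) (le_lastCut trivial le_rfl)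
    have hsub : A ⊆ {s} := fun x hx => by
      have := hA hx
      simp only [hlast, Finset.mem_filter] at this
      simp [this.1.2]
    rcases Finset.subset_singleton_iff.1 hsub with rfl | rfl
    · exact tight_empty _
    · exact tight_singleton _ s

end Word

/-! ### The graph of a word -/

/-- Closed form of the state after `m` letters, in terms of composed recolorings. -/
lemma nlcRun_take {V : Type} {k : ℕ} (α : List (NLCLetter V k)) (L : ℕ → NLCLetter V k)
    (hL : ∀ i (hi : i < α.length), L i = α[i]) (hnd : (α.map NLCLetter.v).Nodup) (m : ℕ)
    (hm : m ≤ α.length) :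
    (∀ x q, (nlcRun (α.take m)).2 x = some q ↔
      ∃ i < m, x = (L i).v ∧ recol (fun i => (L i).r) (i + 1) m (L i).c = q) ∧
    (∀ x y, (nlcRun (α.take m)).1 x y ↔ ∃ i j, i < j ∧ j < m ∧
      ((x = (L i).v ∧ y = (L j).v) ∨ (x = (L j).v ∧ y = (L i).v)) ∧
      recol (fun i => (L i).r) (i + 1) j (L i).c ∈ (L j).e) := by
  have hinj : ∀ i < α.length, ∀ j < α.length, (L i).v = (L j).v → i = j := by
    intro i hi j hj h
    rw [hL i hi, hL j hj] at h
    exact (hnd.getElem_inj_iff (hi := by simpa) (hj := by simpa)).1 (by simpa using h)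
  induction m with
  | zero => simp [nlcRun]
  | succ m ih =>
    obtain ⟨ih₁, ih₂⟩ := ih (by omega)
    have hstep : nlcRun (α.take (m + 1)) = nlcStep (nlcRun (α.take m)) (L m) := by
      rw [List.take_succ_eq_append_getElem (by omega), nlcRun, List.foldl_append, hL m (by omega)]
      rfl
    rw [hstep]
    refine ⟨fun x q => ?_, fun x y => ?_⟩
    · by_cases hx : x = (L m).v
      · simp only [nlcStep, hx, if_true, Option.some.injEq]
        constructor
        · rintro rfl
          exact ⟨m, by omega, rfl, by rw [recol_self]; rfl⟩
        · rintro ⟨i, hi, hv, hq⟩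
          obtain rfl := hinj m (by omega) i (by omega) hv
          simpa [recol_self] using hq
      · simp only [nlcStep, hx, if_false, Option.map_eq_some_iff]
        constructor
        · rintro ⟨p, hp, rfl⟩
          obtain ⟨i, hi, hv, rfl⟩ := (ih₁ x p).1 hp
          refine ⟨i, by omega, hv, ?_⟩
          simp [recol, show i + 1 ≤ m by omega]
        · rintro ⟨i, hi, hv, rfl⟩
          have him : i ≠ m := by rintro rfl; exact hx hv
          refine ⟨_, (ih₁ x _).2 ⟨i, by omega, hv, rfl⟩, ?_⟩
          simp [recol, show i + 1 ≤ m by omega]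
    · simp only [nlcStep, ih₂, ih₁]
      constructor
      · rintro (⟨i, j, hij, hj, h⟩ | ⟨hx, q, hq, i, hi, hv, rfl⟩ | ⟨hy, q, hq, i, hi, hv, rfl⟩)
        · exact ⟨i, j, hij, by omega, h⟩
        · exact ⟨i, m, hi, by omega, Or.inr ⟨hx, hv⟩, hq⟩
        · exact ⟨i, m, hi, by omega, Or.inl ⟨hv, hy⟩, hq⟩
      · rintro ⟨i, j, hij, hj, hxy, hq⟩
        by_cases hjm : j = m
        · subst hjm
          rcases hxy with ⟨hx, hy⟩ | ⟨hx, hy⟩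
          · exact Or.inr (Or.inr ⟨hy, _, hq, i, hij, hx, rfl⟩)
          · exact Or.inr (Or.inl ⟨hx, _, hq, i, hij, hy, rfl⟩)
        · exact Or.inl ⟨i, j, hij, by omega, hxy, hq⟩

/-- A graph that is isomorphic, via `v`, to the subgraph of `H` on `0, …, n - 1` inherits a
coloring from a partition of that subgraph into `M` perfect parts. -/
lemma colorable_of_perfectPart {V : Type} [Fintype V] (G : SimpleGraph V) (H : SimpleGraph ℕ)
    (M n : ℕ) (hp : PerfectPart H M (Finset.range n)) (v : ℕ → V) (idx : V → ℕ)
    (hidx : ∀ x, idx x < n) (hv : ∀ x, v (idx x) = x)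
    (hinj : ∀ i < n, ∀ j < n, v i = v j → i = j)
    (hadj : ∀ i < n, ∀ j < n, (G.Adj (v i) (v j) ↔ H.Adj i j)) :
    G.Colorable (M * G.cliqueNum) := by
  obtain ⟨γ, hγ⟩ := hp
  choose m hm col hcol hproper using fun g => hγ g _ (Finset.Subset.refl _)
  have hle : ∀ g, m g ≤ G.cliqueNum := by
    intro g
    obtain ⟨t, ht, hc⟩ := hm g
    have htn : ∀ i ∈ t, i < n := fun i hi => by
      simpa using (Finset.mem_filter.1 (ht hi)).1
    rw [SimpleGraph.isNClique_iff] at hc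
    have hcl : G.IsClique (t.image v : Finset V) := by
      intro x hx y hy hxy
      obtain ⟨i, hi, rfl⟩ := Finset.mem_image.1 (Finset.mem_coe.1 hx)
      obtain ⟨j, hj, rfl⟩ := Finset.mem_image.1 (Finset.mem_coe.1 hy)
      exact (hadj i (htn i hi) j (htn j hj)).2
        (hc.1 hi hj (fun h => hxy (congrArg v h)))
    have hcard : (t.image v).card = t.card :=
      Finset.card_image_of_injOn fun i hi j hj h => hinj i (htn i hi) j (htn j hj) h
    rw [← hc.2, ← hcard]
    exact hcl.card_le_cliqueNum
  have hmem : ∀ x, idx x ∈ (Finset.range n).filter fun i => γ i = γ (idx x) := by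
    intro x; simp [hidx x]
  let f : V → Fin M × Fin G.cliqueNum := fun x =>
    (γ (idx x), ⟨col (γ (idx x)) (idx x), (hcol _ _ (hmem x)).trans_le (hle _)⟩)
  have hf : ∀ {x y}, G.Adj x y → f x ≠ f y := by
    intro x y hxy heq
    simp only [f, Prod.mk.injEq, Fin.mk.injEq] at heq
    obtain ⟨h₁, h₂⟩ := heq
    rw [← hv x, ← hv y, hadj _ (hidx x) _ (hidx y)] at hxy
    refine hproper (γ (idx x)) _ (hmem x) (idx y) ?_ hxy ?_
    · simp [hidx y, h₁]
    · rw [h₂, h₁]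
  simpa using (SimpleGraph.Coloring.mk f hf).colorable

lemma colorable_of_witness {V : Type} [Fintype V] (G : SimpleGraph V) (k : ℕ)
    (h : LinNLCWitness G k) : G.Colorable ((k * 2 ^ (k + 1)) ^ k * G.cliqueNum) := by
  obtain ⟨α, hnd, hall, hG⟩ := h
  rcases isEmpty_or_nonempty V with hV | ⟨⟨x₀⟩⟩
  · exact SimpleGraph.Colorable.of_isEmpty _
  obtain ⟨a₀, -, -⟩ := List.mem_map.1 (hall x₀)
  let L : ℕ → NLCLetter V k := fun i => α.getD i a₀
  have hL : ∀ i (hi : i < α.length), L i = α[i] := fun i hi => by simp [L, hi]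
  have hinj : ∀ i < α.length, ∀ j < α.length, (L i).v = (L j).v → i = j := by
    intro i hi j hj h
    rw [hL i hi, hL j hj] at h
    exact (hnd.getElem_inj_iff (hi := by simpa) (hj := by simpa)).1 (by simpa using h)
  have hex : ∀ x, ∃ i < α.length, (L i).v = x := by
    intro x
    obtain ⟨a, ha, rfl⟩ := List.mem_map.1 (hall x)
    obtain ⟨i, hi, rfl⟩ := List.mem_iff_getElem.1 ha
    exact ⟨i, hi, by rw [hL i hi]⟩
  choose idx hidx hv using hex
  have hrun := (nlcRun_take α L hL hnd α.length le_rfl).2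
  rw [List.take_length] at hrun
  refine colorable_of_perfectPart G _ _ α.length
    (perfectPart_range (fun i => (L i).r) (fun i => (L i).c) (fun i => (L i).e) α.length)
    (fun i => (L i).v) idx hidx hv hinj ?_
  intro i hi j hj
  rw [hG, hrun]
  constructor
  · rintro ⟨a, b, hab, hb, ⟨h₁, h₂⟩ | ⟨h₁, h₂⟩, he⟩
    · obtain rfl := hinj i hi a (by omega) h₁
      obtain rfl := hinj j hj b hb h₂
      exact Or.inl ⟨hab, he⟩
    · obtain rfl := hinj i hi b hb h₁
      obtain rfl := hinj j hj a (by omega) h₂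
      exact Or.inr ⟨hab, he⟩
  · rintro (⟨hij, he⟩ | ⟨hij, he⟩)
    · exact ⟨i, j, hij, hj, Or.inl ⟨rfl, rfl⟩, he⟩
    · exact ⟨j, i, hij, hi, Or.inr ⟨rfl, rfl⟩, he⟩

/-- For every finite graph `G` of linear NLC-width at most `k`,
`χ(G) ≤ (k·2^{k+1})^{3·k^k} · ω(G)`. -/
theorem linNLC_chi_bounded {V : Type} [Fintype V] (k : ℕ) (G : SimpleGraph V)
    (h : LinNLCWidthLE G k) :
    G.chromaticNumber ≤ (((k * 2 ^ (k + 1)) ^ (3 * k ^ k) * G.cliqueNum : ℕ) : ℕ∞) := by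
  obtain ⟨k', hk', hw⟩ := h
  rcases isEmpty_or_nonempty V with hV | ⟨⟨x₀⟩⟩
  · exact (SimpleGraph.Colorable.of_isEmpty _).chromaticNumber_le
  have hpos : 0 < k' := by
    obtain ⟨α, -, hall, -⟩ := hw
    obtain ⟨a, -, -⟩ := List.mem_map.1 (hall x₀)
    exact a.c.pos
  refine ((colorable_of_witness G k' hw).mono ?_).chromaticNumber_le
  refine Nat.mul_le_mul_right _ ?_
  have hexp : k' ≤ 3 * k ^ k := by
    have := Nat.le_self_pow (show k ≠ 0 by omega) k
    omega
  calc (k' * 2 ^ (k' + 1)) ^ k' ≤ (k * 2 ^ (k + 1)) ^ k' := by gcongr; norm_num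
    _ ≤ (k * 2 ^ (k + 1)) ^ (3 * k ^ k) :=
        Nat.pow_le_pow_right (Nat.mul_pos (by omega) (by positivity)) hexp
end
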